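/- arXiv:2312.04892 — 3 statements merged into one kernel-verified Lean document; each statement's English description precedes it below -/
import Mathlib

section
/- Let g_e ∈ ℝ, ω₀ > 0, X₀ > 0, and ρ₀ ∈ ℝ with a := ω₀² + g_e·ρ₀ > 0. Define V_P(ρ) = (1/2)·√a·√(ω₀² + g_e·ρ)·X₀² on the set of ρ with ω₀² + g_e·ρ > 0. Then: (i) V_P is differentiable there with V_P'(ρ) = (g_e·X₀²/4)·√a/√(ω₀² + g_e·ρ), which at ρ = ρ₀ equals g_e·X₀²/4; (ii) V_P is twice differentiable at ρ₀ and the coefficient of (ρ − ρ₀)² in its second-order Taylor expansion at ρ₀ equals −g_e²·X₀²/(16·a). In particular for g_e ≠ 0 this coefficient is strictly negative: the interaction generated after the pulse is always attractive and proportional to the squared phonon oscillation amplitude X₀². -/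
/-- For `V_P(ρ) = (1/2)√a·√(ω₀² + g_e ρ)·X₀²` with `a = ω₀² + g_e ρ₀ > 0`:
(i) wherever `ω₀² + g_e ρ > 0`, `V_P' (ρ) = (g_e X₀²/4)·√a/√(ω₀² + g_e ρ)`, which at
`ρ₀` equals `g_e X₀²/4`; (ii) the quadratic Taylor coefficient of `V_P` at `ρ₀` is
`−g_e²X₀²/(16a)`, strictly negative for `g_e ≠ 0`. -/
theorem stmt_8 (g_e ω₀ X₀ ρ₀ : ℝ) (hω₀ : 0 < ω₀) (hX₀ : 0 < X₀)
    (ha : 0 < ω₀ ^ 2 + g_e * ρ₀) :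
    let a : ℝ := ω₀ ^ 2 + g_e * ρ₀
    let VP : ℝ → ℝ := fun ρ =>
      (1 / 2) * Real.sqrt a * Real.sqrt (ω₀ ^ 2 + g_e * ρ) * X₀ ^ 2
    (∀ ρ : ℝ, 0 < ω₀ ^ 2 + g_e * ρ →
      HasDerivAt VP (g_e * X₀ ^ 2 / 4 * Real.sqrt a / Real.sqrt (ω₀ ^ 2 + g_e * ρ)) ρ) ∧
    g_e * X₀ ^ 2 / 4 * Real.sqrt a / Real.sqrt (ω₀ ^ 2 + g_e * ρ₀) = g_e * X₀ ^ 2 / 4 ∧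
    DifferentiableAt ℝ (deriv VP) ρ₀ ∧
    deriv (deriv VP) ρ₀ / 2 = -(g_e ^ 2 * X₀ ^ 2) / (16 * a) ∧
    (g_e ≠ 0 → -(g_e ^ 2 * X₀ ^ 2) / (16 * a) < 0) := by
  intro a VP
  have hs : ∀ ρ : ℝ, 0 < ω₀ ^ 2 + g_e * ρ →
      HasDerivAt (fun ρ : ℝ => Real.sqrt (ω₀ ^ 2 + g_e * ρ))
        (g_e / (2 * Real.sqrt (ω₀ ^ 2 + g_e * ρ))) ρ := by
    intro ρ hρ
    have h1 : HasDerivAt (fun ρ : ℝ => ω₀ ^ 2 + g_e * ρ) g_e ρ := by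
      simpa using ((hasDerivAt_id ρ).const_mul g_e).const_add (ω₀ ^ 2)
    exact h1.sqrt hρ.ne'
  have hV : ∀ ρ : ℝ, 0 < ω₀ ^ 2 + g_e * ρ →
      HasDerivAt VP (g_e * X₀ ^ 2 / 4 * Real.sqrt a / Real.sqrt (ω₀ ^ 2 + g_e * ρ)) ρ := by
    intro ρ hρ
    have h2 := ((hs ρ hρ).const_mul (1 / 2 * Real.sqrt a)).mul_const (X₀ ^ 2)
    have hp := Real.sqrt_pos.mpr hρ
    refine h2.congr_deriv ?_
    field_simp
    ring
  have hsa : 0 < Real.sqrt a := Real.sqrt_pos.mpr ha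
  have hsq : Real.sqrt a ^ 2 = a := Real.sq_sqrt ha.le
  have hev : deriv VP =ᶠ[nhds ρ₀]
      fun ρ => g_e * X₀ ^ 2 / 4 * Real.sqrt a / Real.sqrt (ω₀ ^ 2 + g_e * ρ) := by
    have hc : ContinuousAt (fun ρ : ℝ => ω₀ ^ 2 + g_e * ρ) ρ₀ := by fun_prop
    filter_upwards [hc.eventually (lt_mem_nhds ha)] with ρ hρ
    exact (hV ρ hρ).deriv
  have hD : HasDerivAt (deriv VP) (-(g_e ^ 2 * X₀ ^ 2) / (8 * a)) ρ₀ := by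
    have h3 := ((hasDerivAt_const ρ₀ (g_e * X₀ ^ 2 / 4 * Real.sqrt a)).div
      (hs ρ₀ ha) hsa.ne')
    refine (h3.congr_deriv ?_).congr_of_eventuallyEq hev
    change (0 * Real.sqrt a - g_e * X₀ ^ 2 / 4 * Real.sqrt a * (g_e / (2 * Real.sqrt a)))
      / Real.sqrt a ^ 2 = _
    rw [hsq]
    have : a ≠ 0 := ha.ne'
    field_simp
    ring
  have ha' : 0 < a := ha
  refine ⟨hV, ?_, hD.differentiableAt, ?_, ?_⟩
  · exact mul_div_cancel_right₀ _ hsa.ne'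
  · rw [hD.deriv]
    field_simp
    ring
  · intro hg
    rw [neg_div]
    have : 0 < g_e ^ 2 * X₀ ^ 2 / (16 * a) := by positivity
    linarith
end

section
/- Let δ, γ, ω, B⊥ ∈ ℝ with B⊥ ≠ 0 and γω ≠ 0, and let θ₀, φ₀ ∈ ℝ satisfy cos θ₀ ≠ 0 together with the fixed-point equations −δ·sin θ₀ − B⊥·cos θ₀·cos φ₀ = 0 and (γω/2)·sin θ₀ + B⊥·sin φ₀ = 0. Then s := sin²θ₀ satisfies the quadratic equation (γ²ω²/4)·s² − (δ² + γ²ω²/4 + B⊥²)·s + B⊥² = 0; equivalently, n_z² := cos²θ₀ equals 1 − (1/2)·[1 + (4/(γ²ω²))·(δ² + B⊥²) ± √( (1 + (4/(γ²ω²))·(δ² + B⊥²))² − 16B⊥²/(γ²ω²) )] for one of the two choices of sign (and the discriminant is nonnegative). -/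
/-- The rotating-frame fixed-point equations of the driven dissipative spin
force `s = sin²θ₀` to obey `(γ²ω²/4)s² − (δ² + γ²ω²/4 + B⊥²)s + B⊥² = 0`; equivalently
`n_z² = cos²θ₀ = 1 − (1/2)[A ± √(A² − 16B⊥²/(γ²ω²))]` with
`A = 1 + (4/(γ²ω²))(δ² + B⊥²)` for one of the two signs, the discriminant being
nonnegative. -/
theorem stmt_11 (δ γ ω B : ℝ) (hB : B ≠ 0) (hγω : γ * ω ≠ 0)
    (θ₀ φ₀ : ℝ) (hcos : Real.cos θ₀ ≠ 0)
    (h1 : -δ * Real.sin θ₀ - B * Real.cos θ₀ * Real.cos φ₀ = 0)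
    (h2 : γ * ω / 2 * Real.sin θ₀ + B * Real.sin φ₀ = 0) :
    let s : ℝ := Real.sin θ₀ ^ 2
    let A : ℝ := 1 + 4 / (γ ^ 2 * ω ^ 2) * (δ ^ 2 + B ^ 2)
    γ ^ 2 * ω ^ 2 / 4 * s ^ 2 - (δ ^ 2 + γ ^ 2 * ω ^ 2 / 4 + B ^ 2) * s + B ^ 2 = 0 ∧
    0 ≤ A ^ 2 - 16 * B ^ 2 / (γ ^ 2 * ω ^ 2) ∧
    (Real.cos θ₀ ^ 2 =
        1 - (1 / 2) * (A + Real.sqrt (A ^ 2 - 16 * B ^ 2 / (γ ^ 2 * ω ^ 2))) ∨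
      Real.cos θ₀ ^ 2 =
        1 - (1 / 2) * (A - Real.sqrt (A ^ 2 - 16 * B ^ 2 / (γ ^ 2 * ω ^ 2)))) := by
  intro s A
  have hc : Real.cos θ₀ ^ 2 = 1 - s := by
    have := Real.sin_sq_add_cos_sq θ₀
    simp only [s]; linarith
  have hp := Real.sin_sq_add_cos_sq φ₀
  have e1 : δ ^ 2 * s = B ^ 2 * (1 - s) * Real.cos φ₀ ^ 2 := by
    rw [← hc]
    have : δ * Real.sin θ₀ = -(B * Real.cos θ₀ * Real.cos φ₀) := by linarith
    calc δ ^ 2 * s = (δ * Real.sin θ₀) ^ 2 := by simp only [s]; ring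
      _ = _ := by rw [this]; ring
  have e2 : γ ^ 2 * ω ^ 2 / 4 * s = B ^ 2 * Real.sin φ₀ ^ 2 := by
    have : γ * ω / 2 * Real.sin θ₀ = -(B * Real.sin φ₀) := by linarith
    calc γ ^ 2 * ω ^ 2 / 4 * s = (γ * ω / 2 * Real.sin θ₀) ^ 2 := by simp only [s]; ring
      _ = _ := by rw [this]; ring
  have q : γ ^ 2 * ω ^ 2 / 4 * s ^ 2 - (δ ^ 2 + γ ^ 2 * ω ^ 2 / 4 + B ^ 2) * s + B ^ 2 = 0 := by
    linear_combination (-1) * e1 - (1 - s) * e2 - B ^ 2 * (1 - s) * hp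
  have hγ : γ ≠ 0 := left_ne_zero_of_mul hγω
  have hω : ω ≠ 0 := right_ne_zero_of_mul hγω
  have d : A ^ 2 - 16 * B ^ 2 / (γ ^ 2 * ω ^ 2) = (2 * s - A) ^ 2 := by
    have : (A ^ 2 - 16 * B ^ 2 / (γ ^ 2 * ω ^ 2)) - (2 * s - A) ^ 2 =
        -(16 / (γ ^ 2 * ω ^ 2)) * (γ ^ 2 * ω ^ 2 / 4 * s ^ 2
          - (δ ^ 2 + γ ^ 2 * ω ^ 2 / 4 + B ^ 2) * s + B ^ 2) := by
      simp only [A]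
      field_simp
      ring
    rw [q] at this
    linarith
  refine ⟨q, ?_, ?_⟩
  · rw [d]; positivity
  · rw [d, Real.sqrt_sq_eq_abs, hc]
    rcases abs_choice (2 * s - A) with h | h
    · left; rw [h]; ring
    · right; rw [h]; ring
end

section
/- Let ω > 0 and define, for Δ > ω/2, h(Δ) = 1 − (2Δ/ω)·arcsin(ω/(2Δ))/√(1 − (ω/(2Δ))²). Then lim_{Δ → (ω/2)⁺} √(2Δ − ω)·h(Δ) = −(π/2)·√(ω/2). In particular h(Δ) → −∞ as Δ decreases to ω/2, diverging as −(π/2)·√(ω/2)·(2Δ − ω)^{−1/2}; i.e., the Ponderomotive potential diverges as −1/√δ with detuning δ = 2Δ − ω → 0⁺. -/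
/-- With `h(Δ) = 1 − (2Δ/ω)·arcsin(ω/(2Δ))/√(1 − (ω/(2Δ))²)` for
`Δ > ω/2`, one has `√(2Δ − ω)·h(Δ) → −(π/2)·√(ω/2)` as `Δ → (ω/2)⁺`; in particular
`h(Δ) → −∞`, i.e. the Ponderomotive potential diverges as `−1/√δ` with detuning
`δ = 2Δ − ω → 0⁺`. -/
theorem stmt_17 (ω : ℝ) (hω : 0 < ω) :
    let h : ℝ → ℝ := fun Δ =>
      1 - (2 * Δ / ω) * Real.arcsin (ω / (2 * Δ)) / Real.sqrt (1 - (ω / (2 * Δ)) ^ 2)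
    Filter.Tendsto (fun Δ => Real.sqrt (2 * Δ - ω) * h Δ)
      (nhdsWithin (ω / 2) (Set.Ioi (ω / 2)))
      (nhds (-(Real.pi / 2) * Real.sqrt (ω / 2))) ∧
    Filter.Tendsto h (nhdsWithin (ω / 2) (Set.Ioi (ω / 2))) Filter.atBot := by
  intro h
  have hmem : ∀ᶠ Δ in nhdsWithin (ω / 2) (Set.Ioi (ω / 2)), ω / 2 < Δ :=
    eventually_mem_nhdsWithin
  have key : Filter.Tendsto (fun Δ => Real.sqrt (2 * Δ - ω) * h Δ)
      (nhdsWithin (ω / 2) (Set.Ioi (ω / 2)))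
      (nhds (-(Real.pi / 2) * Real.sqrt (ω / 2))) := by
    have hc : ContinuousAt (fun Δ : ℝ => Real.sqrt (2 * Δ - ω) -
        (2 * Δ / ω) * Real.arcsin (ω / (2 * Δ)) * (2 * Δ / Real.sqrt (2 * Δ + ω))) (ω / 2) := by
      have h1 : (2 * (ω / 2)) ≠ 0 := by positivity
      have h2 : Real.sqrt (2 * (ω / 2) + ω) ≠ 0 := by positivity
      have h3 : ContinuousAt (fun Δ : ℝ => ω / (2 * Δ)) (ω / 2) := by
        fun_prop (disch := assumption)
      have h4 : ContinuousAt (fun Δ : ℝ => Real.arcsin (ω / (2 * Δ))) (ω / 2) :=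
        Real.continuous_arcsin.continuousAt.comp h3
      have h5 : ContinuousAt (fun Δ : ℝ => 2 * Δ / Real.sqrt (2 * Δ + ω)) (ω / 2) :=
        ContinuousAt.div (by fun_prop) (by fun_prop) h2
      have h6 : ContinuousAt (fun Δ : ℝ => Real.sqrt (2 * Δ - ω)) (ω / 2) := by fun_prop
      exact h6.sub (ContinuousAt.mul (ContinuousAt.mul (by fun_prop) h4) h5)
    have ht := hc.tendsto.mono_left (nhdsWithin_le_nhds (s := Set.Ioi (ω / 2)))
    have hval : Real.sqrt (2 * (ω / 2) - ω) -
        (2 * (ω / 2) / ω) * Real.arcsin (ω / (2 * (ω / 2))) *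
          (2 * (ω / 2) / Real.sqrt (2 * (ω / 2) + ω)) = -(Real.pi / 2) * Real.sqrt (ω / 2) := by
      have e : 2 * (ω / 2) = ω := by ring
      have e2 : ω / Real.sqrt (ω + ω) = Real.sqrt (ω / 2) := by
        rw [div_eq_iff (by positivity), ← Real.sqrt_mul (by positivity)]
        rw [show ω / 2 * (ω + ω) = ω ^ 2 by ring, Real.sqrt_sq hω.le]
      rw [e, e2, div_self hω.ne', Real.arcsin_one, sub_self, Real.sqrt_zero]
      ring
    rw [hval] at ht
    refine ht.congr' ?_
    filter_upwards [hmem] with Δ hΔ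
    have p1 : 0 < 2 * Δ - ω := by linarith
    have p0 : 0 < 2 * Δ := by linarith
    have p2 : 0 < 2 * Δ + ω := by linarith
    have e : Real.sqrt (1 - (ω / (2 * Δ)) ^ 2)
        = Real.sqrt (2 * Δ - ω) * Real.sqrt (2 * Δ + ω) / (2 * Δ) := by
      rw [← Real.sqrt_mul p1.le, eq_div_iff p0.ne']
      nth_rewrite 2 [← Real.sqrt_sq p0.le]
      rw [← Real.sqrt_mul' _ (by positivity)]
      congr 1
      have : Δ ≠ 0 := by linarith
      field_simp
      ring
    have q1 := (Real.sqrt_pos.2 p1).ne'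
    have q2 := (Real.sqrt_pos.2 p2).ne'
    simp only [h]
    rw [e]
    generalize Real.arcsin (ω / (2 * Δ)) = a
    field_simp
  refine ⟨key, ?_⟩
  have hs : Filter.Tendsto (fun Δ : ℝ => (Real.sqrt (2 * Δ - ω))⁻¹)
      (nhdsWithin (ω / 2) (Set.Ioi (ω / 2))) Filter.atTop := by
    apply Filter.Tendsto.inv_tendsto_nhdsGT_zero
    refine tendsto_nhdsWithin_iff.2 ⟨?_, ?_⟩
    · have hc : ContinuousAt (fun Δ : ℝ => Real.sqrt (2 * Δ - ω)) (ω / 2) := by fun_prop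
      have ht := hc.tendsto.mono_left (nhdsWithin_le_nhds (s := Set.Ioi (ω / 2)))
      rwa [show 2 * (ω / 2) - ω = 0 by ring, Real.sqrt_zero] at ht
    · filter_upwards [hmem] with Δ hΔ
      exact Real.sqrt_pos.2 (by linarith)
  have hneg : -(Real.pi / 2) * Real.sqrt (ω / 2) < 0 := by
    have : 0 < Real.pi / 2 * Real.sqrt (ω / 2) := by positivity
    linarith
  refine (key.neg_mul_atTop hneg hs).congr' ?_
  filter_upwards [hmem] with Δ hΔ
  have q1 := (Real.sqrt_pos.2 (show 0 < 2 * Δ - ω by linarith)).ne'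
  rw [mul_comm (Real.sqrt _), mul_assoc, mul_inv_cancel₀ q1, mul_one]
end
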